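/- arXiv:quant-ph/0406207 — 7 statements merged into one kernel-verified Lean document; each statement's English description precedes it below -/
import Mathlib

section
/- Let θ be a real number with 0 < θ ≤ π/2 and let q̄ be a nonnegative real number. If (1 − cos θ)·(sin²((q̄+1)θ) + sin²(q̄θ))/sin²θ = 1, then θ = π/2 or cos((2q̄+1)θ) = −1, i.e. (2q̄+1)θ = (2k+1)π for some integer k ≥ 0; in particular, if in addition q̄ ≤ π/(2θ), then θ = π/2 or q̄ = (π − θ)/(2θ). -/
open Real

/-!
Since `sin² x + sin² y = 1 - cos (x + y) cos (x - y)`, the success probability equals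
`(1 - cos θ cos ((2q̄+1)θ)) / (1 + cos θ)`. It is `1` exactly when
`cos θ (1 + cos ((2q̄+1)θ)) = 0`, so apart from `θ = π/2` the number `(2q̄+1)θ` is an odd multiple
of `π`. The bound `q̄ ≤ π/(2θ)` gives `(2q̄+1)θ ≤ π + θ < 3π`, which leaves only `π` itself.
-/

/-- The success probability `(1 - cos θ)(U_q(cos θ)² + U_{q-1}(cos θ)²)` of partial-diffusion search
after `q` iterations, where the Chebyshev polynomials of the second kind are extended to real index
by `U_q(cos θ) = sin((q+1)θ)/sin θ`. For `sin θ = 0` division by zero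
makes it the junk value `0`. -/
noncomputable def searchSuccessProb (θ q : ℝ) : ℝ :=
  (1 - cos θ) * (sin ((q + 1) * θ) ^ 2 + sin (q * θ) ^ 2) / sin θ ^ 2

theorem sin_sq_add_sin_sq_eq (x y : ℝ) :
    sin x ^ 2 + sin y ^ 2 = 1 - cos (x + y) * cos (x - y) := by
  rw [cos_add, cos_sub]
  linear_combination (1 - sin y ^ 2) * sin_sq_add_cos_sq x + cos x ^ 2 * sin_sq_add_cos_sq y

theorem one_add_cos_ne_zero_of_sin_ne_zero {θ : ℝ} (hθ : sin θ ≠ 0) : 1 + cos θ ≠ 0 :=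
  fun h => hθ (sin_eq_zero_iff_cos_eq.mpr (Or.inr (by linarith)))

theorem searchSuccessProb_eq_div {θ : ℝ} (hθ : sin θ ≠ 0) (q : ℝ) :
    searchSuccessProb θ q = (1 - cos θ * cos ((2 * q + 1) * θ)) / (1 + cos θ) := by
  have hsum : sin ((q + 1) * θ) ^ 2 + sin (q * θ) ^ 2 = 1 - cos θ * cos ((2 * q + 1) * θ) := by
    rw [sin_sq_add_sin_sq_eq, mul_comm (cos θ)]
    ring_nf
  rw [searchSuccessProb, hsum,
    div_eq_div_iff (pow_ne_zero 2 hθ) (one_add_cos_ne_zero_of_sin_ne_zero hθ), sin_sq]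
  ring

theorem searchSuccessProb_eq_one_iff {θ : ℝ} (hθ : sin θ ≠ 0) (q : ℝ) :
    searchSuccessProb θ q = 1 ↔ cos θ = 0 ∨ cos ((2 * q + 1) * θ) = -1 := by
  rw [searchSuccessProb_eq_div hθ, div_eq_one_iff_eq (one_add_cos_ne_zero_of_sin_ne_zero hθ),
    ← add_eq_zero_iff_eq_neg, ← mul_eq_zero]
  constructor <;> intro h <;> linarith

theorem cos_eq_zero_iff_eq_pi_div_two {θ : ℝ} (hθ0 : 0 ≤ θ) (hθ : θ ≤ π) :
    cos θ = 0 ↔ θ = π / 2 := by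
  rw [← cos_pi_div_two]
  exact injOn_cos.eq_iff ⟨hθ0, hθ⟩ ⟨by positivity, by linarith [pi_pos]⟩

theorem cos_eq_neg_one_iff_exists_nonneg {x : ℝ} (hx : -π < x) :
    cos x = -1 ↔ ∃ k : ℤ, 0 ≤ k ∧ x = (2 * (k : ℝ) + 1) * π := by
  rw [cos_eq_neg_one_iff]
  constructor
  · rintro ⟨k, rfl⟩
    have hk : (-1 : ℝ) < k := by nlinarith [pi_pos]
    exact ⟨k, Int.lt_iff_add_one_le.mp (mod_cast hk), by ring⟩
  · rintro ⟨k, -, rfl⟩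
    exact ⟨k, by ring⟩

theorem cos_eq_neg_one_iff_eq_pi {x : ℝ} (hx₁ : -π < x) (hx₂ : x < 3 * π) :
    cos x = -1 ↔ x = π := by
  refine ⟨fun h => ?_, fun h => h ▸ cos_pi⟩
  obtain ⟨k, hk0, rfl⟩ := (cos_eq_neg_one_iff_exists_nonneg hx₁).mp h
  have hk1 : (k : ℝ) < 1 := by nlinarith [pi_pos]
  obtain rfl : k = 0 := le_antisymm (Int.lt_add_one_iff.mp (mod_cast hk1)) hk0
  simp

theorem stmt_0_general (θ qbar : ℝ) (hθ0 : 0 < θ) (hθ : θ < π) (hq : -1 ≤ qbar)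
    (h : searchSuccessProb θ qbar = 1) :
    (θ = π / 2 ∨ (cos ((2 * qbar + 1) * θ) = -1 ∧
      ∃ k : ℤ, 0 ≤ k ∧ (2 * qbar + 1) * θ = (2 * (k : ℝ) + 1) * π)) ∧
    (qbar ≤ π / (2 * θ) → θ = π / 2 ∨ qbar = (π - θ) / (2 * θ)) := by
  have hlower : -π < (2 * qbar + 1) * θ := by nlinarith
  rw [searchSuccessProb_eq_one_iff (sin_pos_of_pos_of_lt_pi hθ0 hθ).ne',
    cos_eq_zero_iff_eq_pi_div_two hθ0.le hθ.le] at h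
  refine ⟨h.imp_right fun hcos => ⟨hcos, (cos_eq_neg_one_iff_exists_nonneg hlower).mp hcos⟩,
    fun hle => h.imp_right fun hcos => ?_⟩
  rw [le_div_iff₀ (by positivity)] at hle
  have hphase : (2 * qbar + 1) * θ = π :=
    (cos_eq_neg_one_iff_eq_pi hlower (by linarith)).mp hcos
  rw [eq_div_iff (by positivity)]
  linarith

/-- Theorem 1 of the paper: if the success probability
`(1 - cos θ)(sin²((q̄+1)θ) + sin²(q̄θ))/sin²θ` equals 1, then `θ = π/2` or
`cos((2q̄+1)θ) = -1`, i.e. `(2q̄+1)θ = (2k+1)π` for some integer `k ≥ 0`;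
in particular, if moreover `q̄ ≤ π/(2θ)`, then `θ = π/2` or `q̄ = (π - θ)/(2θ)`. -/
theorem stmt_0 (θ qbar : ℝ) (hθ0 : 0 < θ) (hθ : θ ≤ π / 2) (hq : 0 ≤ qbar)
    (h : (1 - cos θ) * (sin ((qbar + 1) * θ) ^ 2 + sin (qbar * θ) ^ 2) / sin θ ^ 2 = 1) :
    (θ = π / 2 ∨ (cos ((2 * qbar + 1) * θ) = -1 ∧
      ∃ k : ℤ, 0 ≤ k ∧ (2 * qbar + 1) * θ = (2 * (k : ℝ) + 1) * π)) ∧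
    (qbar ≤ π / (2 * θ) → θ = π / 2 ∨ qbar = (π - θ) / (2 * θ)) := by
  exact stmt_0_general θ qbar hθ0 (by linarith [pi_pos]) (by linarith) h
end

section
/- Let θ be a real number with 0 < θ ≤ π/2 and m a positive integer. Then (1/m) · Σ_{q=0}^{m−1} (1 − cos θ)·(sin²((q+1)θ) + sin²(qθ))/sin²θ = (1/(1 + cos θ))·(1 − cos θ · sin(2mθ)/(2m sin θ)). -/
open Real Finset

/-!
By `2 sin² x = 1 - cos 2x`, the sum of `sin² (qz)` over `q < m` reduces to a sum of cosines in
arithmetic progression, which telescopes after multiplication by `sin z`. Shifting the progression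
by `z` replaces the resulting `cos ((m - 1) z)` by `cos ((m + 1) z)`, and these two cosines add up
to `2 cos (mz) cos z`.
-/

section

open Complex

theorem two_mul_sin_mul_sum_sin_sq (n : ℕ) (a b : ℂ) :
    2 * (sin a * ∑ i ∈ range n, sin (a * i + b) ^ 2)
      = n * sin a - sin (n * a) * cos ((n - 1) * a + 2 * b) := by
  have two_mul_sin_sq (x : ℂ) : 2 * sin x ^ 2 = 1 - cos (2 * x) := by
    rw [Complex.cos_two_mul, Complex.sin_sq]
    ring
  calc
    2 * (sin a * ∑ i ∈ range n, sin (a * i + b) ^ 2)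
      = sin a * ∑ i ∈ range n, (1 - cos (2 * a * i + 2 * b)) := by
      rw [mul_left_comm, mul_sum]
      simp_rw [two_mul_sin_sq, mul_add, mul_assoc]
    _ = n * sin a - sin (2 * a / 2) * ∑ i ∈ range n, cos (2 * a * i + 2 * b) := by
      rw [sum_sub_distrib, sum_const, card_range, nsmul_one, mul_sub, mul_comm (sin a),
        mul_div_cancel_left₀ a two_ne_zero]
    _ = n * sin a - sin (n * a) * cos ((n - 1) * a + 2 * b) := by
      rw [Complex.sin_mul_sum_cos]
      ring_nf

theorem two_mul_sin_mul_sum_sin_sq_succ_add_sin_sq (n : ℕ) (z : ℂ) :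
    2 * (sin z * ∑ q ∈ range n, (sin ((q + 1) * z) ^ 2 + sin (q * z) ^ 2))
      = 2 * n * sin z - cos z * sin (2 * n * z) := by
  have shifted := two_mul_sin_mul_sum_sin_sq n z z
  have unshifted := two_mul_sin_mul_sum_sin_sq n z 0
  have cos_add_cos_eq :
      cos ((n - 1) * z + 2 * z) + cos ((n - 1) * z + 2 * 0) = 2 * cos (n * z) * cos z := by
    rw [Complex.cos_add_cos]
    ring_nf
  have sin_double : sin (2 * n * z) = 2 * sin (n * z) * cos (n * z) := by
    rw [mul_assoc, Complex.sin_two_mul]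
  have sum_split : ∑ q ∈ range n, (sin ((q + 1) * z) ^ 2 + sin (q * z) ^ 2)
      = ∑ q ∈ range n, sin (z * q + z) ^ 2 + ∑ q ∈ range n, sin (z * q + 0) ^ 2 := by
    simp_rw [← sum_add_distrib, add_one_mul, add_zero, mul_comm z]
  rw [sum_split, sin_double]
  linear_combination shifted + unshifted - sin (n * z) * cos_add_cos_eq

theorem average_sin_sq_succ_add_sin_sq {n : ℕ} (hn : n ≠ 0) {z : ℂ} (hz : sin z ≠ 0) :
    1 / (n : ℂ) * ∑ q ∈ range n, (sin ((q + 1) * z) ^ 2 + sin (q * z) ^ 2)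
      = 1 - cos z * sin (2 * n * z) / (2 * n * sin z) := by
  have hn' : (n : ℂ) ≠ 0 := mod_cast hn
  have hdenom : 2 * (n : ℂ) * sin z ≠ 0 := mul_ne_zero (mul_ne_zero two_ne_zero hn') hz
  rw [one_sub_div hdenom, eq_div_iff hdenom, ← two_mul_sin_mul_sum_sin_sq_succ_add_sin_sq]
  rw [one_div_mul_eq_div, div_mul_eq_mul_div, div_eq_iff hn']
  ring

theorem one_sub_cos_div_sin_sq {z : ℂ} (hz : sin z ≠ 0) :
    (1 - cos z) / sin z ^ 2 = 1 / (1 + cos z) := by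
  have sin_sq_factor : sin z ^ 2 = (1 - cos z) * (1 + cos z) := by
    rw [Complex.sin_sq]
    ring
  have hfactor : 1 - cos z ≠ 0 := left_ne_zero_of_mul (sin_sq_factor ▸ pow_ne_zero 2 hz)
  rw [sin_sq_factor, div_mul_cancel_left₀ hfactor, one_div]

theorem stmt_2_general {z : ℂ} (hz : sin z ≠ 0) {m : ℕ} (hm : m ≠ 0) :
    1 / (m : ℂ) * ∑ q ∈ range m,
        (1 - cos z) * (sin ((q + 1) * z) ^ 2 + sin (q * z) ^ 2) / sin z ^ 2
      = 1 / (1 + cos z) * (1 - cos z * sin (2 * m * z) / (2 * m * sin z)) := by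
  simp_rw [mul_div_right_comm (1 - cos z) _ (sin z ^ 2), one_sub_cos_div_sin_sq hz, ← mul_sum]
  rw [mul_left_comm, average_sin_sq_succ_add_sin_sq hm hz]

end

/-- Lemma 2 of the paper (formula part): the average over `q ∈ {0, …, m-1}` of the
success probability `P_s^{(q)} = (1 - cos θ)(sin²((q+1)θ) + sin²(qθ))/sin²θ` equals
`(1/(1 + cos θ))·(1 - cos θ · sin(2mθ)/(2m sin θ))`. -/
theorem stmt_2 (θ : ℝ) (hθ0 : 0 < θ) (hθ : θ ≤ π / 2) (m : ℕ) (hm : 0 < m) :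
    (1 / (m : ℝ)) * ∑ q ∈ Finset.range m,
        (1 - cos θ) * (sin (((q : ℝ) + 1) * θ) ^ 2 + sin ((q : ℝ) * θ) ^ 2) / sin θ ^ 2
      = (1 / (1 + cos θ)) * (1 - cos θ * sin (2 * (m : ℝ) * θ) / (2 * (m : ℝ) * sin θ)) := by
  have hsin : sin θ ≠ 0 := (sin_pos_of_pos_of_lt_pi hθ0 (by linarith [pi_pos])).ne'
  exact Complex.ofReal_injective (by push_cast; exact stmt_2_general (mod_cast hsin) hm.ne')
end

section
/- Let θ be a real number with 0 < θ ≤ π/2 and let m be a positive integer with m ≥ 1/sin θ. Then (1/(1 + cos θ))·(1 − cos θ · sin(2mθ)/(2m sin θ)) ≥ 1/4. -/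
open Real

section LinearOrderedField

variable {K : Type*} [Field K] [LinearOrder K] [IsStrictOrderedRing K] {a c s u : K}

lemma mul_div_two_mul_le_abs_div_two (hs : |s| ≤ 1) (ha : 1 ≤ a) :
    c * s / (2 * a) ≤ |c| / 2 := by
  have ha0 : 0 < a := zero_lt_one.trans_le ha
  calc c * s / (2 * a) ≤ |c * s / (2 * a)| := le_abs_self _
    _ = |c| * |s| / (2 * a) := by rw [abs_div, abs_mul, abs_of_pos (mul_pos two_pos ha0)]
    _ ≤ |c| * 1 / (2 * 1) := by gcongr
    _ = |c| / 2 := by rw [mul_one, mul_one]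

lemma one_fourth_lt_one_div_one_add_mul_one_sub (hc : |c| < 1) (hu : u ≤ |c| / 2) :
    1 / 4 < 1 / (1 + c) * (1 - u) := by
  have hc1 : 0 < 1 + c := by linarith [neg_lt_of_abs_lt hc]
  rw [one_div_mul_eq_div, lt_div_iff₀ hc1]
  linarith [le_abs_self c]

end LinearOrderedField

lemma abs_cos_lt_one_of_sin_ne_zero {θ : ℝ} (h : sin θ ≠ 0) : |cos θ| < 1 := by
  rw [← sq_lt_one_iff_abs_lt_one, cos_sq']
  exact sub_lt_self 1 (sq_pos_of_ne_zero h)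

theorem stmt_3_general {θ x : ℝ} (hθ : 0 < sin θ) (hx : 1 / sin θ ≤ x) :
    1 / 4 < 1 / (1 + cos θ) * (1 - cos θ * sin (2 * x * θ) / (2 * x * sin θ)) := by
  have hx_sin : 1 ≤ x * sin θ := (div_le_iff₀ hθ).mp hx
  have h_oscillation : cos θ * sin (2 * x * θ) / (2 * x * sin θ) ≤ |cos θ| / 2 := by
    rw [mul_assoc 2 x (sin θ)]
    exact mul_div_two_mul_le_abs_div_two (abs_sin_le_one _) hx_sin
  exact one_fourth_lt_one_div_one_add_mul_one_sub
    (abs_cos_lt_one_of_sin_ne_zero hθ.ne') h_oscillation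

/-- Lemma 2 of the paper (bound part): if `0 < θ ≤ π/2` and `m ≥ 1/sin θ`, then
`P_m = (1/(1 + cos θ))·(1 - cos θ · sin(2mθ)/(2m sin θ)) ≥ 1/4`. -/
theorem stmt_3 (θ : ℝ) (hθ0 : 0 < θ) (hθ : θ ≤ π / 2) (m : ℕ) (hm : 0 < m)
    (hm' : 1 / sin θ ≤ (m : ℝ)) :
    (1 / 4 : ℝ) ≤ (1 / (1 + cos θ)) * (1 - cos θ * sin (2 * (m : ℝ) * θ) / (2 * (m : ℝ) * sin θ)) :=
  (stmt_3_general (sin_pos_of_pos_of_lt_pi hθ0 (by linarith [pi_pos])) hm').le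
end

section
/- Fix real numbers s and y, and define sequences (a_q), (b_q), (c_q) for q ≥ 0 by a_0 = s, b_0 = s, c_0 = 0, and for q ≥ 1: a_q = 2⟨α_q⟩ − a_{q−1}, b_q = 2⟨α_q⟩ − c_{q−1}, c_q = −b_{q−1}, where ⟨α_q⟩ = y·a_{q−1} + (1 − y)·c_{q−1}. Then for every q ≥ 0: a_q = s·(U_q(y) − U_{q−1}(y)), b_q = s·U_q(y), and c_q = −s·U_{q−1}(y). -/
open Polynomial

/-!
The relation `a = b + c` is preserved by an iteration. Substituting it into the weighted mean
turns the step for the other two amplitudes into `(b, c) ↦ (2 * y * b + c, -b)`, whose matrix has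
characteristic polynomial `X ^ 2 - 2 * y * X + 1`. Hence `b` obeys the three-term recurrence of the
polynomials `U`, and `c` is `-b` delayed by one iteration.
-/

section ChebyshevRecurrence

variable {R : Type*} [CommRing R]

theorem eval_U_eq (n : ℤ) (y : R) :
    (Chebyshev.U R n).eval y =
      2 * y * (Chebyshev.U R (n - 1)).eval y - (Chebyshev.U R (n - 2)).eval y := by
  rw [Chebyshev.U_eq]
  simp only [eval_sub, eval_mul, eval_ofNat, eval_X]

theorem eq_eval_U_of_recurrence {u : ℕ → R} {y : R}
    (hu : ∀ n, u (n + 2) = 2 * y * u (n + 1) - u n) (n : ℕ) :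
    u n = u 1 * (Chebyshev.U R ((n : ℤ) - 1)).eval y -
      u 0 * (Chebyshev.U R ((n : ℤ) - 2)).eval y := by
  induction n using Nat.twoStepInduction with
  | zero => simp
  | one => norm_num
  | more n ih ih_succ =>
    rw [hu, ih_succ, ih, eval_U_eq (((n + 2 : ℕ) : ℤ) - 1), eval_U_eq (((n + 2 : ℕ) : ℤ) - 2)]
    push_cast
    ring_nf

end ChebyshevRecurrence

/-- Amplitude sequences produced by the iteration of the partial-diffusion search algorithm: `a`
for the non-solution states, `b` and `c` for the solution states entangled with `|0⟩` and `|1⟩`.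
The weighted mean `⟨α⟩ = y * a + (1 - y) * c` is written out in the fields; no initial amplitudes
are prescribed. -/
structure IsPartialDiffusion {R : Type*} [CommRing R] (y : R) (a b c : ℕ → R) : Prop where
  a_succ (n : ℕ) : a (n + 1) = 2 * (y * a n + (1 - y) * c n) - a n
  b_succ (n : ℕ) : b (n + 1) = 2 * (y * a n + (1 - y) * c n) - c n
  c_succ (n : ℕ) : c (n + 1) = -b n

namespace IsPartialDiffusion

variable {R : Type*} [CommRing R] {y : R} {a b c : ℕ → R}

theorem a_eq_b_add_c (h : IsPartialDiffusion y a b c) (h0 : a 0 = b 0 + c 0) (n : ℕ) :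
    a n = b n + c n := by
  induction n with
  | zero => exact h0
  | succ n ih =>
    rw [h.a_succ, h.b_succ, h.c_succ, ih]
    ring

theorem b_succ_eq_two_mul_b_add_c (h : IsPartialDiffusion y a b c) (h0 : a 0 = b 0 + c 0)
    (n : ℕ) : b (n + 1) = 2 * y * b n + c n := by
  rw [h.b_succ, h.a_eq_b_add_c h0]
  ring

theorem b_recurrence (h : IsPartialDiffusion y a b c) (h0 : a 0 = b 0 + c 0) (n : ℕ) :
    b (n + 2) = 2 * y * b (n + 1) - b n := by
  rw [h.b_succ_eq_two_mul_b_add_c h0, h.c_succ, ← sub_eq_add_neg]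

theorem b_eq_eval_U (h : IsPartialDiffusion y a b c) (h0 : a 0 = b 0 + c 0) (n : ℕ) :
    b n = b 0 * (Chebyshev.U R (n : ℤ)).eval y +
      c 0 * (Chebyshev.U R ((n : ℤ) - 1)).eval y := by
  rw [eq_eval_U_of_recurrence (h.b_recurrence h0) n, h.b_succ_eq_two_mul_b_add_c h0,
    eval_U_eq (n : ℤ)]
  ring

theorem c_eq_eval_U (h : IsPartialDiffusion y a b c) (h0 : a 0 = b 0 + c 0) (n : ℕ) :
    c n = -(b 0 * (Chebyshev.U R ((n : ℤ) - 1)).eval y +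
      c 0 * (Chebyshev.U R ((n : ℤ) - 2)).eval y) := by
  cases n with
  | zero => simp
  | succ n =>
    rw [h.c_succ, h.b_eq_eval_U h0, Nat.cast_add_one, add_sub_cancel_right,
      show (n : ℤ) + 1 - 2 = n - 1 by ring]

end IsPartialDiffusion

theorem stmt_4_general {R : Type*} [CommRing R] {y : R} {a b c : ℕ → R}
    (h : IsPartialDiffusion y a b c) (h0 : a 0 = b 0 + c 0) (q : ℕ) :
    a q = b 0 * ((Chebyshev.U R (q : ℤ)).eval y - (Chebyshev.U R ((q : ℤ) - 1)).eval y) +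
        c 0 * ((Chebyshev.U R ((q : ℤ) - 1)).eval y - (Chebyshev.U R ((q : ℤ) - 2)).eval y) ∧
      b q = b 0 * (Chebyshev.U R (q : ℤ)).eval y +
        c 0 * (Chebyshev.U R ((q : ℤ) - 1)).eval y ∧
      c q = -(b 0 * (Chebyshev.U R ((q : ℤ) - 1)).eval y +
        c 0 * (Chebyshev.U R ((q : ℤ) - 2)).eval y) := by
  refine ⟨?_, h.b_eq_eval_U h0 q, h.c_eq_eval_U h0 q⟩
  rw [h.a_eq_b_add_c h0, h.b_eq_eval_U h0 q, h.c_eq_eval_U h0 q]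
  ring

/-- Closed forms (Eqn 53 of the paper) for the amplitude recurrences of the
partial-diffusion search algorithm: with `a₀ = b₀ = s`, `c₀ = 0` and, for `q ≥ 1`,
`a_q = 2⟨α_q⟩ - a_{q-1}`, `b_q = 2⟨α_q⟩ - c_{q-1}`, `c_q = -b_{q-1}` where
`⟨α_q⟩ = y·a_{q-1} + (1 - y)·c_{q-1}`, one has `a_q = s(U_q(y) - U_{q-1}(y))`,
`b_q = s·U_q(y)` and `c_q = -s·U_{q-1}(y)` for all `q ≥ 0`, where `U` is the
Chebyshev polynomial of the second kind. -/
theorem stmt_4 (s y : ℝ) (a b c : ℕ → ℝ)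
    (ha0 : a 0 = s) (hb0 : b 0 = s) (hc0 : c 0 = 0)
    (ha : ∀ q : ℕ, 1 ≤ q →
      a q = 2 * (y * a (q - 1) + (1 - y) * c (q - 1)) - a (q - 1))
    (hb : ∀ q : ℕ, 1 ≤ q →
      b q = 2 * (y * a (q - 1) + (1 - y) * c (q - 1)) - c (q - 1))
    (hc : ∀ q : ℕ, 1 ≤ q → c q = - b (q - 1)) :
    ∀ q : ℕ,
      a q = s * ((Chebyshev.U ℝ (q : ℤ)).eval y - (Chebyshev.U ℝ ((q : ℤ) - 1)).eval y) ∧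
      b q = s * (Chebyshev.U ℝ (q : ℤ)).eval y ∧
      c q = - s * (Chebyshev.U ℝ ((q : ℤ) - 1)).eval y := by
  have h : IsPartialDiffusion y a b c :=
    ⟨fun n => ha (n + 1) n.succ_pos, fun n => hb (n + 1) n.succ_pos, fun n => hc (n + 1) n.succ_pos⟩
  simpa [ha0, hb0, hc0] using stmt_4_general h (by simp [ha0, hb0, hc0])
end

section
/- For every real y with −1 ≤ y ≤ 1 and every integer q ≥ 0: (1 − y)·(U_q(y)² + U_{q−1}(y)²) + y·(U_q(y) − U_{q−1}(y))² = 1. -/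
open Polynomial

theorem chebyshev_U_sq_add_U_sq (R : Type*) [CommRing R] (n : ℤ) :
    Chebyshev.U R n ^ 2 + Chebyshev.U R (n + 1) ^ 2
      - 2 * X * Chebyshev.U R n * Chebyshev.U R (n + 1) = 1 := by
  have rescaled := congrArg (compRingHom (2 * X)) (Chebyshev.S_sq_add_S_sq R n)
  simpa only [map_sub, map_add, map_mul, map_pow, map_one, coe_compRingHom_apply, X_comp,
    Chebyshev.S_comp_two_mul_X] using rescaled

theorem chebyshev_U_eval_sq_add_U_eval_sq {R : Type*} [CommRing R] (y : R) (n : ℤ) :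
    (Chebyshev.U R n).eval y ^ 2 + (Chebyshev.U R (n + 1)).eval y ^ 2
      - 2 * y * (Chebyshev.U R n).eval y * (Chebyshev.U R (n + 1)).eval y = 1 := by
  simpa only [eval_sub, eval_add, eval_mul, eval_pow, eval_X, eval_one, eval_ofNat] using
    congrArg (eval y) (chebyshev_U_sq_add_U_sq R n)

theorem stmt_5_general {R : Type*} [CommRing R] (y : R) (q : ℤ) :
    (1 - y) * ((Chebyshev.U R q).eval y ^ 2 + (Chebyshev.U R (q - 1)).eval y ^ 2)
      + y * ((Chebyshev.U R q).eval y - (Chebyshev.U R (q - 1)).eval y) ^ 2 = 1 := by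
  have invariant := chebyshev_U_eval_sq_add_U_eval_sq y (q - 1)
  rw [sub_add_cancel] at invariant
  set a := (Chebyshev.U R q).eval y
  set b := (Chebyshev.U R (q - 1)).eval y
  calc (1 - y) * (a ^ 2 + b ^ 2) + y * (a - b) ^ 2
      = b ^ 2 + a ^ 2 - 2 * y * b * a := by ring
    _ = 1 := invariant

/-- Normalization identity (Eqn 58 of the paper) in Chebyshev form: for `-1 ≤ y ≤ 1`
and every integer `q ≥ 0`,
`(1 - y)(U_q(y)² + U_{q-1}(y)²) + y(U_q(y) - U_{q-1}(y))² = 1`, where `U` is the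
Chebyshev polynomial of the second kind. -/
theorem stmt_5 (y : ℝ) (h1 : -1 ≤ y) (h2 : y ≤ 1) (q : ℕ) :
    (1 - y) * ((Chebyshev.U ℝ (q : ℤ)).eval y ^ 2 + (Chebyshev.U ℝ ((q : ℤ) - 1)).eval y ^ 2)
      + y * ((Chebyshev.U ℝ (q : ℤ)).eval y - (Chebyshev.U ℝ ((q : ℤ) - 1)).eval y) ^ 2 = 1 :=
  stmt_5_general y q
end

section
/- Let θ be a real number with 0 < θ ≤ π/2 and set q = ⌊π/(2θ)⌋. Then (1 − cos θ)·(sin²((q+1)θ) + sin²(qθ))/sin²θ ≥ (1 + cos²θ)/(1 + cos θ). -/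
/-!
Since `(1 - cos θ) / sin² θ = 1 / (1 + cos θ)`, the claim is
`sin² ((q+1)θ) + sin² (qθ) ≥ 1 + cos² θ`. The left side equals `1 - cos ((2q+1)θ) cos θ`. Here
`2q + 1` is the odd integer nearest to `π / θ`, so `(2q+1)θ` lies within `|θ|` of `π` and
`cos ((2q+1)θ) ≤ -cos θ`.
-/

open Real

lemma abs_two_mul_floor_add_one_sub_two_mul_le_one {R : Type*} [CommRing R] [LinearOrder R]
    [IsStrictOrderedRing R] [FloorRing R] (x : R) : |2 * (⌊x⌋ : R) + 1 - 2 * x| ≤ 1 := by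
  rw [abs_le]
  constructor <;> linarith [Int.floor_le x, Int.lt_floor_add_one x]

lemma abs_two_mul_floor_div_add_one_mul_sub_le {K : Type*} [Field K] [LinearOrder K]
    [IsStrictOrderedRing K] [FloorRing K] (x : K) {y : K} (hy : y ≠ 0) :
    |(2 * (⌊x / (2 * y)⌋ : K) + 1) * y - x| ≤ |y| := by
  have hx : 2 * (x / (2 * y)) * y = x := by field_simp
  calc |(2 * (⌊x / (2 * y)⌋ : K) + 1) * y - x|
      = |2 * (⌊x / (2 * y)⌋ : K) + 1 - 2 * (x / (2 * y))| * |y| := by rw [← abs_mul, sub_mul, hx]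
    _ ≤ 1 * |y| := by gcongr; exact abs_two_mul_floor_add_one_sub_two_mul_le_one _
    _ = |y| := one_mul _

lemma cos_le_neg_cos_of_abs_sub_pi_le {x y : ℝ} (hxy : |x - π| ≤ |y|) (hy : |y| ≤ π) :
    cos x ≤ -cos y := by
  have hcos : cos |y| ≤ cos |x - π| := cos_le_cos_of_nonneg_of_le_pi (abs_nonneg _) hy hxy
  rw [cos_abs, cos_abs, cos_sub_pi] at hcos
  exact le_neg_of_le_neg hcos

lemma sin_sq_add_sin_sq (a b : ℝ) :
    sin a ^ 2 + sin b ^ 2 = 1 - cos (a + b) * cos (a - b) := by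
  rw [cos_add, cos_sub]
  linear_combination (1 - sin b ^ 2) * sin_sq_add_cos_sq a + cos a ^ 2 * sin_sq_add_cos_sq b

lemma one_add_cos_sq_le_sin_sq_add_sin_sq {a b : ℝ} (hadd : |a + b - π| ≤ |a - b|)
    (hsub : |a - b| ≤ π / 2) : 1 + cos (a - b) ^ 2 ≤ sin a ^ 2 + sin b ^ 2 := by
  have hnonneg : 0 ≤ cos (a - b) := cos_nonneg_of_mem_Icc (abs_le.mp hsub)
  have hcos : cos (a + b) ≤ -cos (a - b) :=
    cos_le_neg_cos_of_abs_sub_pi_le hadd (hsub.trans (half_le_self pi_nonneg))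
  calc 1 + cos (a - b) ^ 2 = 1 - -cos (a - b) * cos (a - b) := by ring
    _ ≤ 1 - cos (a + b) * cos (a - b) := by gcongr
    _ = sin a ^ 2 + sin b ^ 2 := (sin_sq_add_sin_sq a b).symm

lemma one_sub_cos_mul_div_sin_sq {θ : ℝ} (hθ : sin θ ≠ 0) (s : ℝ) :
    (1 - cos θ) * s / sin θ ^ 2 = s / (1 + cos θ) := by
  have hsin : sin θ ^ 2 = (1 - cos θ) * (1 + cos θ) := by rw [sin_sq]; ring
  have hne : 1 - cos θ ≠ 0 := left_ne_zero_of_mul (hsin ▸ pow_ne_zero 2 hθ)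
  rw [hsin, mul_div_mul_left _ _ hne]

theorem stmt_9_general {θ : ℝ} (hθ0 : θ ≠ 0) (hθ : |θ| ≤ π / 2) :
    (1 + cos θ ^ 2) / (1 + cos θ) ≤
      (1 - cos θ) * (sin (((⌊π / (2 * θ)⌋ : ℝ) + 1) * θ) ^ 2 + sin ((⌊π / (2 * θ)⌋ : ℝ) * θ) ^ 2)
        / sin θ ^ 2 := by
  have hlt : |θ| < π := hθ.trans_lt (half_lt_self pi_pos)
  have hsin : sin θ ≠ 0 :=
    mt (sin_eq_zero_iff_of_lt_of_lt (abs_lt.mp hlt).1 (abs_lt.mp hlt).2).mp hθ0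
  have hfloor : |(2 * (⌊π / (2 * θ)⌋ : ℝ) + 1) * θ - π| ≤ |θ| :=
    abs_two_mul_floor_div_add_one_mul_sub_le π hθ0
  rw [one_sub_cos_mul_div_sin_sq hsin]
  set q : ℝ := (⌊π / (2 * θ)⌋ : ℝ)
  have hadd : (q + 1) * θ + q * θ = (2 * q + 1) * θ := by ring
  have hsub : (q + 1) * θ - q * θ = θ := by ring
  have hkey : 1 + cos θ ^ 2 ≤ sin ((q + 1) * θ) ^ 2 + sin (q * θ) ^ 2 := by
    simpa only [hsub] using one_add_cos_sq_le_sin_sq_add_sin_sq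
      (a := (q + 1) * θ) (b := q * θ) (by rwa [hadd, hsub]) (by rwa [hsub])
  exact div_le_div_of_nonneg_right hkey (by linarith [neg_one_le_cos θ])

/-- Eqn 60b of the paper: the success probability after `q = ⌊π/(2θ)⌋` iterations is
at least `(1 + cos²θ)/(1 + cos θ)`. -/
theorem stmt_9 (θ : ℝ) (hθ0 : 0 < θ) (hθ : θ ≤ π / 2) :
    (1 + cos θ ^ 2) / (1 + cos θ) ≤
      (1 - cos θ) * (sin (((⌊π / (2 * θ)⌋ : ℝ) + 1) * θ) ^ 2 + sin ((⌊π / (2 * θ)⌋ : ℝ) * θ) ^ 2)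
        / sin θ ^ 2 :=
  stmt_9_general hθ0.ne' (by rwa [abs_of_pos hθ0])
end

section
/- Let N and M be positive integers with M ≤ N, set s = 1/√N and y = 1 − M/N, and define sequences (a_q), (b_q), (c_q) by a_0 = s, b_0 = s, c_0 = 0, and for q ≥ 1: a_q = 2⟨α_q⟩ − a_{q−1}, b_q = 2⟨α_q⟩ − c_{q−1}, c_q = −b_{q−1}, where ⟨α_q⟩ = y·a_{q−1} + (1 − y)·c_{q−1}. Then for every q ≥ 0: (N − M)·a_q² + M·b_q² + M·c_q² = 1. -/
/-!
Give the non-solution states total weight `N - M` and the solution states total weight `M`. One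
iteration reflects the pair `(a, c)` about its weighted mean `⟨α⟩`, which preserves
`(N - M) a² + M c²`; the reflected `c` becomes the new `b`, and the old `b` becomes, up to sign,
the new `c`. So the squared norm `(N - M) a² + M b² + M c²` is an invariant of the iteration, and
its initial value is `N s² = 1`.
-/

namespace PartialDiffusion

theorem sum_mul_two_mul_sub_sq {ι R : Type*} [CommRing R] (t : Finset ι) (w x : ι → R) (μ : R)
    (hμ : (∑ i ∈ t, w i) * μ = ∑ i ∈ t, w i * x i) :
    ∑ i ∈ t, w i * (2 * μ - x i) ^ 2 = ∑ i ∈ t, w i * x i ^ 2 := by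
  calc ∑ i ∈ t, w i * (2 * μ - x i) ^ 2
      = ∑ i ∈ t, (4 * μ ^ 2 * w i - 4 * μ * (w i * x i) + w i * x i ^ 2) :=
        Finset.sum_congr rfl fun i _ => by ring
    _ = 4 * μ * ((∑ i ∈ t, w i) * μ - ∑ i ∈ t, w i * x i) + ∑ i ∈ t, w i * x i ^ 2 := by
        rw [Finset.sum_add_distrib, Finset.sum_sub_distrib, ← Finset.mul_sum, ← Finset.mul_sum]
        ring
    _ = ∑ i ∈ t, w i * x i ^ 2 := by rw [hμ, sub_self, mul_zero, zero_add]

variable {R : Type*} [CommRing R]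

/-- The squared norm of a state with amplitudes `a` on the non-solution states, of total weight
`u`, and `b`, `c` on the solution states entangled with `|0⟩` and `|1⟩`, each of total weight `v`.
In the paper `u = N - M` and `v = M`. -/
def normSq (u v a b c : R) : R :=
  u * a ^ 2 + v * b ^ 2 + v * c ^ 2

theorem normSq_step {u v a c μ : R} (hμ : (u + v) * μ = u * a + v * c) (b : R) :
    normSq u v (2 * μ - a) (2 * μ - c) (-b) = normSq u v a b c := by
  have reflect : u * (2 * μ - a) ^ 2 + v * (2 * μ - c) ^ 2 = u * a ^ 2 + v * c ^ 2 := by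
    simpa [Fin.sum_univ_two] using
      sum_mul_two_mul_sub_sq Finset.univ ![u, v] ![a, c] μ (by simpa [Fin.sum_univ_two] using hμ)
  calc normSq u v (2 * μ - a) (2 * μ - c) (-b)
      = u * (2 * μ - a) ^ 2 + v * (2 * μ - c) ^ 2 + v * b ^ 2 := by rw [normSq, neg_sq]
    _ = u * a ^ 2 + v * c ^ 2 + v * b ^ 2 := by rw [reflect]
    _ = normSq u v a b c := add_right_comm _ _ _

theorem normSq_eq_normSq_zero {u v : R} {a b c μ : ℕ → R}
    (hμ : ∀ q, (u + v) * μ q = u * a q + v * c q)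
    (ha : ∀ q, a (q + 1) = 2 * μ q - a q) (hb : ∀ q, b (q + 1) = 2 * μ q - c q)
    (hc : ∀ q, c (q + 1) = -b q) (q : ℕ) :
    normSq u v (a q) (b q) (c q) = normSq u v (a 0) (b 0) (c 0) := by
  induction q with
  | zero => rfl
  | succ q ih => rw [ha, hb, hc, normSq_step (hμ q), ih]

end PartialDiffusion

open PartialDiffusion in
theorem stmt_19_general {K : Type*} [Field K] {n m s y : K} (hs : n * s ^ 2 = 1)
    (hy : y = 1 - m / n) {a b c : ℕ → K} (ha0 : a 0 = s) (hb0 : b 0 = s) (hc0 : c 0 = 0)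
    (ha : ∀ q, a (q + 1) = 2 * (y * a q + (1 - y) * c q) - a q)
    (hb : ∀ q, b (q + 1) = 2 * (y * a q + (1 - y) * c q) - c q)
    (hc : ∀ q, c (q + 1) = -b q) (q : ℕ) :
    (n - m) * a q ^ 2 + m * b q ^ 2 + m * c q ^ 2 = 1 := by
  have hn : n ≠ 0 := left_ne_zero_of_mul_eq_one hs
  have hm : m = n * (1 - y) := by rw [hy, sub_sub_cancel, mul_div_cancel₀ m hn]
  have mean : ∀ q, (n - m + m) * (y * a q + (1 - y) * c q) = (n - m) * a q + m * c q := fun q => by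
    linear_combination (a q - c q) * hm
  calc normSq (n - m) m (a q) (b q) (c q)
      = normSq (n - m) m s s 0 := by rw [normSq_eq_normSq_zero mean ha hb hc, ha0, hb0, hc0]
    _ = n * s ^ 2 := by rw [normSq]; ring
    _ = 1 := hs

/-- Eqn 58 of the paper: with `s = 1/√N`, `y = 1 - M/N`, and the amplitude
recurrences `a₀ = b₀ = s`, `c₀ = 0`, and for `q ≥ 1`: `a_q = 2⟨α_q⟩ - a_{q-1}`,
`b_q = 2⟨α_q⟩ - c_{q-1}`, `c_q = -b_{q-1}` where
`⟨α_q⟩ = y·a_{q-1} + (1 - y)·c_{q-1}`, the state stays normalized: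
`(N - M)a_q² + Mb_q² + Mc_q² = 1` for all `q ≥ 0`. -/
theorem stmt_19 (N M : ℕ) (hN : 0 < N) (hM : 0 < M) (hMN : M ≤ N)
    (s y : ℝ) (hs : s = 1 / Real.sqrt (N : ℝ)) (hy : y = 1 - (M : ℝ) / (N : ℝ))
    (a b c : ℕ → ℝ)
    (ha0 : a 0 = s) (hb0 : b 0 = s) (hc0 : c 0 = 0)
    (ha : ∀ q : ℕ, 1 ≤ q →
      a q = 2 * (y * a (q - 1) + (1 - y) * c (q - 1)) - a (q - 1))
    (hb : ∀ q : ℕ, 1 ≤ q →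
      b q = 2 * (y * a (q - 1) + (1 - y) * c (q - 1)) - c (q - 1))
    (hc : ∀ q : ℕ, 1 ≤ q → c q = - b (q - 1)) :
    ∀ q : ℕ, ((N : ℝ) - (M : ℝ)) * a q ^ 2 + (M : ℝ) * b q ^ 2 + (M : ℝ) * c q ^ 2 = 1 := by
  have norm_s : (N : ℝ) * s ^ 2 = 1 := by
    rw [hs, div_pow, one_pow, Real.sq_sqrt N.cast_nonneg, mul_one_div_cancel (by positivity)]
  exact stmt_19_general norm_s hy ha0 hb0 hc0 (fun q => ha (q + 1) q.succ_pos)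
    (fun q => hb (q + 1) q.succ_pos) (fun q => hc (q + 1) q.succ_pos)
end
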